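/- arXiv:2307.08497 — 2 statements merged into one kernel-verified Lean document; each statement's English description precedes it below -/
import Mathlib

section
/- Let (H,(V_h)_{h ∈ V(H)}) be a graph-decomposition of a graph G and let k ∈ ℕ. Suppose that for every node h ∈ V(H) there exists a vertex z_h of G with V_h ⊆ B_G(z_h, k). Then (H,(V'_h)_{h ∈ V(H)}) with V'_h := B_G(V_h, k) for every h ∈ V(H) is a graph-decomposition of G of radial width at most 2k. -/
open SimpleGraph

namespace RadialPaper

variable {V W N : Type*}

/-- The ball of radius `r` around a set `U` of vertices of `G`. -/
def ballSet (G : SimpleGraph V) (U : Set V) (r : ℕ) : Set V :=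
  {v | ∃ u ∈ U, G.edist u v ≤ (r : ℕ∞)}

/-- `G` has radius at most `r`: some vertex has distance at most `r` from every vertex.
The empty graph has radius `0`; a nonempty disconnected graph has radius `∞`, hence
satisfies `radiusLE` for no `r`. -/
def radiusLE (G : SimpleGraph V) (r : ℕ) : Prop :=
  Nonempty V → ∃ v : V, ∀ w : V, G.edist v w ≤ (r : ℕ∞)

/-- `(Hg, B)` is a graph-decomposition of `G` modelled on `Hg`. -/
def IsGraphDecomp (G : SimpleGraph V) (Hg : SimpleGraph N) (B : N → Set V) : Prop :=
  (∀ v : V, ∃ h : N, v ∈ B h) ∧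
  (∀ ⦃u v : V⦄, G.Adj u v → ∃ h : N, u ∈ B h ∧ v ∈ B h) ∧
  (∀ v : V, (Hg.induce {h : N | v ∈ B h}).Connected)

/-- A subgraph `X` of `G` is `c`-quasi-geodesic. -/
def IsQuasiGeodesic (G : SimpleGraph V) (X : G.Subgraph) (c : ℕ) : Prop :=
  ∀ u v : X.verts, X.coe.edist u v ≤ (c : ℕ∞) * G.edist (u : V) (v : V)

/-- The subgraph `Y` of `G` is a `(≥ k)`-subdivision of the graph `X`. -/
def IsSubdivGE (k : ℕ) (X : SimpleGraph W) {G : SimpleGraph V} (Y : G.Subgraph) : Prop :=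
  ∃ (f : W → V) (p : ∀ ⦃u v : W⦄, X.Adj u v → G.Walk (f u) (f v)),
    Function.Injective f ∧
    (∀ ⦃u v : W⦄ (h : X.Adj u v), (p h).IsPath) ∧
    (∀ ⦃u v : W⦄ (h : X.Adj u v), k + 1 ≤ (p h).length) ∧
    (∀ ⦃u v : W⦄ (h : X.Adj u v), p h.symm = (p h).reverse) ∧
    (∀ ⦃u v : W⦄ (h : X.Adj u v) (w : W), f w ∈ (p h).support → w = u ∨ w = v) ∧
    (∀ ⦃u v u' v' : W⦄ (h : X.Adj u v) (h' : X.Adj u' v'), s(u, v) ≠ s(u', v') →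
      ∀ x : V, x ∈ (p h).support → x ∈ (p h').support →
        (x = f u ∨ x = f v) ∧ (x = f u' ∨ x = f v')) ∧
    Y.verts = Set.range f ∪ {x : V | ∃ (u v : W) (h : X.Adj u v), x ∈ (p h).support} ∧
    Y.edgeSet = {e : Sym2 V | ∃ (u v : W) (h : X.Adj u v), e ∈ (p h).edges}

/-- `G` contains a `(≥ k)`-subdivision of `X` as a `c`-quasi-geodesic subgraph. -/
def ContainsQuasiGeodesicSubdivGE (G : SimpleGraph V) (k : ℕ) (X : SimpleGraph W) (c : ℕ) :
    Prop :=
  ∃ Y : G.Subgraph, IsSubdivGE k X Y ∧ IsQuasiGeodesic G Y c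

/-- `X` is a minor of `Hg`. -/
def IsMinorOf (X : SimpleGraph W) (Hg : SimpleGraph N) : Prop :=
  ∃ B : W → Set N, (∀ w, (B w).Nonempty) ∧ (∀ w, (Hg.induce (B w)).Connected) ∧
    (∀ ⦃w w' : W⦄, w ≠ w' → Disjoint (B w) (B w')) ∧
    (∀ ⦃w w' : W⦄, X.Adj w w' → ∃ a ∈ B w, ∃ b ∈ B w', Hg.Adj a b)

/-- A class of (finite) graphs, given on the canonical vertex sets `Fin n`, is minor-closed. -/
def MinorClosed (ℋ : ∀ n : ℕ, SimpleGraph (Fin n) → Prop) : Prop :=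
  ∀ ⦃m n : ℕ⦄ (X : SimpleGraph (Fin m)) (Hg : SimpleGraph (Fin n)),
    ℋ n Hg → IsMinorOf X Hg → ℋ m X

/-- The triangle `K³`. -/
def triangleGraph : SimpleGraph (Fin 3) := ⊤

/-- The claw `K_{1,3}`, with centre `0`. -/
def clawGraph : SimpleGraph (Fin 4) := SimpleGraph.fromRel (fun a _ => a = 0)

/-- The wrench graph: two adjacent vertices `0, 1` of degree three, with leaves `2,3` and
`4,5` respectively. -/
def wrenchGraph : SimpleGraph (Fin 6) :=
  SimpleGraph.fromRel (fun a b =>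
    (a = 0 ∧ b = 1) ∨ (a = 0 ∧ b = 2) ∨ (a = 0 ∧ b = 3) ∨ (a = 1 ∧ b = 4) ∨ (a = 1 ∧ b = 5))

/-- The star `K_{1,m}`, with centre `none`. -/
def starGraph (m : ℕ) : SimpleGraph (Option (Fin m)) :=
  SimpleGraph.fromRel (fun a _ => a = none)

/-- `Hg` is a disjoint union of paths: every connected component is a path. -/
def IsUnionOfPaths (Hg : SimpleGraph N) : Prop :=
  ∀ cc : Hg.ConnectedComponent, ∃ m : ℕ,
    Nonempty (Hg.induce cc.supp ≃g SimpleGraph.pathGraph m)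

/-- `Hg` is a disjoint union of cycles: every connected component is a cycle. -/
def IsUnionOfCycles (Hg : SimpleGraph N) : Prop :=
  ∀ cc : Hg.ConnectedComponent, ∃ m : ℕ, 3 ≤ m ∧
    Nonempty (Hg.induce cc.supp ≃g SimpleGraph.cycleGraph m)

/-- `Hg` is a subdivided star, i.e. a `(≥ 0)`-subdivision of some star `K_{1,m}`. -/
def IsSubdividedStar (Hg : SimpleGraph N) : Prop :=
  ∃ m : ℕ, IsSubdivGE 0 (starGraph m) (⊤ : Hg.Subgraph)

/-- `Hg` is a disjoint union of subdivided stars. -/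
def IsUnionOfSubdividedStars (Hg : SimpleGraph N) : Prop :=
  ∀ cc : Hg.ConnectedComponent, IsSubdividedStar (Hg.induce cc.supp)

/-- A graph-decomposition is honest: bags of adjacent nodes intersect. -/
def Honest (Hg : SimpleGraph N) (B : N → Set V) : Prop :=
  ∀ ⦃h h' : N⦄, Hg.Adj h h' → (B h ∩ B h').Nonempty

/-- The outer-radial width of a decomposition of `G` is at most `r`. -/
def OuterRadialWidthLE (G : SimpleGraph V) (B : N → Set V) (r : ℕ) : Prop :=
  ∀ h : N, ∃ z : V, ∀ v ∈ B h, G.edist z v ≤ (r : ℕ∞)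

/-- The radial spread of a decomposition `(Hg, B)` of a graph with vertex set `V`
is at most `r`. -/
def RadialSpreadLE (Hg : SimpleGraph N) (B : N → Set V) (r : ℕ) : Prop :=
  ∀ v : V, radiusLE (Hg.induce {h : N | v ∈ B h}) r

/-- `φ` is an `(m, a, M, A, r)`-quasi-isometry from `Hg` to `G`. -/
def IsQuasiIsometry (Hg : SimpleGraph N) (G : SimpleGraph V) (m a M A r : ℕ)
    (φ : N → V) : Prop :=
  (∀ h h' : N, Hg.edist h h' ≤ (m : ℕ∞) * G.edist (φ h) (φ h') + (a : ℕ∞)) ∧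
  (∀ h h' : N, G.edist (φ h) (φ h') ≤ (M : ℕ∞) * Hg.edist h h' + (A : ℕ∞)) ∧
  (∀ v : V, ∃ h : N, G.edist v (φ h) ≤ (r : ℕ∞))

/-- `C` is a connected component of `G - S`: a maximal connected set of vertices
disjoint from `S`. -/
def IsCompOf (G : SimpleGraph V) (C S : Set V) : Prop :=
  C.Nonempty ∧ Disjoint C S ∧ (G.induce C).Connected ∧
  ∀ D : Set V, C ⊆ D → Disjoint D S → (G.induce D).Connected → D = C

/-- The subgraph `P` of `G` is an `M₀`–`M₁` path meeting `C`. -/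
def IsM01Path (G : SimpleGraph V) (M₀ M₁ C : Set V) (P : G.Subgraph) : Prop :=
  ∃ (x y : V) (q : G.Walk x y), q.IsPath ∧ q.toSubgraph = P ∧ x ∈ M₀ ∧ y ∈ M₁ ∧
    (∀ z ∈ q.support, z ≠ x → z ≠ y → z ∉ M₀ ∪ M₁) ∧ ∃ z ∈ q.support, z ∈ C

/-- The number of `M₀`–`M₁` paths meeting `C` that are contained in the subgraph `OS`. -/
noncomputable def Wcount (G : SimpleGraph V) (M₀ M₁ C : Set V) (OS : G.Subgraph) : ℕ :=
  Set.ncard {P : G.Subgraph | P ≤ OS ∧ IsM01Path G M₀ M₁ C P}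


theorem reach_aux {V N : Type*} (G : SimpleGraph V) (Hg : SimpleGraph N)
    (B : N → Set V) (hdec : IsGraphDecomp G Hg B) (k : ℕ) {u v : V} (p : G.Walk u v) :
    p.length ≤ k → ∀ (S : Set N), S = {h | v ∈ ballSet G (B h) k} → ∀ (h h' : S),
      u ∈ B h.1 → v ∈ B h'.1 → (Hg.induce S).Reachable h h' := by
  have key : ∀ (S : Set N) (u : V), {h | u ∈ B h} ⊆ S → ∀ (h h' : S),
      u ∈ B h.1 → u ∈ B h'.1 → (Hg.induce S).Reachable h h' := by
    intro S u hS h h' hu hu'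
    have := (hdec.2.2 u).preconnected ⟨h.1, hu⟩ ⟨h'.1, hu'⟩
    exact this.map (SimpleGraph.induceHomOfLE Hg hS).toHom
  have sub : ∀ {u v : V} (p : G.Walk u v), p.length ≤ k →
      {h | u ∈ B h} ⊆ {h | v ∈ ballSet G (B h) k} := by
    intro u v p hp h hu
    exact ⟨u, hu, (p.edist_le).trans (by exact_mod_cast hp)⟩
  induction p with
  | nil =>
    rintro hp S rfl h h' hu hv
    exact key _ _ (sub SimpleGraph.Walk.nil hp) h h' hu hv
  | cons hadj p ih =>
    rintro hp S rfl h h' hu hv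
    have hp' : p.length ≤ k := by
      rw [SimpleGraph.Walk.length_cons] at hp; omega
    obtain ⟨h0, h1, h2⟩ := hdec.2.1 hadj
    have m := sub p hp' h2
    exact (key _ _ (sub (SimpleGraph.Walk.cons hadj p) hp) h ⟨h0, m⟩ hu h1).trans
      (ih hp' _ rfl ⟨h0, m⟩ h' h2 hv)

theorem walk_of_edist_le {V : Type*} (G : SimpleGraph V) {u v : V} {k : ℕ}
    (h : G.edist u v ≤ (k : ℕ∞)) : ∃ p : G.Walk u v, p.length ≤ k := by
  have hr : G.Reachable u v := by
    apply SimpleGraph.reachable_of_edist_ne_top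
    intro h'
    rw [h'] at h
    simp at h
  obtain ⟨p, hp⟩ := hr.exists_walk_length_eq_edist
  refine ⟨p, ?_⟩
  rw [← hp] at h
  exact_mod_cast h

theorem ball_edist {V : Type*} (G : SimpleGraph V) (U : Set V) (k : ℕ) {u v : V}
    (hu : u ∈ U) (h : G.edist u v ≤ (k : ℕ∞)) (a : ballSet G U k) (b : ballSet G U k)
    (ha : a.1 = u) (hb : b.1 = v) :
    (G.induce (ballSet G U k)).edist a b ≤ (k : ℕ∞) := by
  classical
  obtain ⟨a, ha'⟩ := a
  obtain ⟨b, hb'⟩ := b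
  subst ha hb
  obtain ⟨p, hp⟩ := walk_of_edist_le G h
  have hs : ∀ x ∈ p.support, x ∈ ballSet G U k := by
    intro x hx
    refine ⟨a, hu, ((p.takeUntil x hx).edist_le).trans ?_⟩
    exact_mod_cast (p.length_takeUntil_le_length hx).trans hp
  refine ((p.induce _ hs).edist_le).trans ?_
  have : (p.induce _ hs).length = p.length := by
    rw [← SimpleGraph.Walk.length_map (SimpleGraph.Embedding.induce _).toHom,
      SimpleGraph.Walk.map_induce]
    rfl
  rw [this]
  exact_mod_cast hp

/-- Let `(Hg, B)` be a graph-decomposition of `G`, `k : ℕ`, and suppose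
that every bag `B h` is contained in a ball `B_G(z_h, k)`. Then replacing every bag by
`B_G(B h, k)` yields a graph-decomposition of `G` of radial width at most `2k`. -/
theorem decomposition_of_balls_around_bags_width
    {V N : Type*} [Fintype V] [Fintype N] (G : SimpleGraph V) (Hg : SimpleGraph N)
    (B : N → Set V) (hdec : IsGraphDecomp G Hg B) (k : ℕ)
    (hz : ∀ h : N, ∃ z : V, ∀ v ∈ B h, G.edist z v ≤ (k : ℕ∞)) :
    IsGraphDecomp G Hg (fun h => ballSet G (B h) k) ∧
      ∀ h, radiusLE (G.induce (ballSet G (B h) k)) (2 * k) := by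
  have dist0 : ∀ v : V, G.edist v v ≤ (k : ℕ∞) := by intro v; simp
  have hsub : ∀ h, B h ⊆ ballSet G (B h) k := fun h v hv => ⟨v, hv, dist0 v⟩
  refine ⟨⟨?_, ?_, ?_⟩, ?_⟩
  · intro v
    obtain ⟨h, hv⟩ := hdec.1 v
    exact ⟨h, hsub h hv⟩
  · intro u v huv
    obtain ⟨h, h1, h2⟩ := hdec.2.1 huv
    exact ⟨h, hsub h h1, hsub h h2⟩
  · intro v
    obtain ⟨h0, hv0⟩ := hdec.1 v
    have R : ∀ x : {h | v ∈ ballSet G (B h) k},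
        (Hg.induce {h | v ∈ ballSet G (B h) k}).Reachable x ⟨h0, hsub h0 hv0⟩ := by
      rintro ⟨x, hx⟩
      obtain ⟨u, hu, huv⟩ := id hx
      obtain ⟨p, hp⟩ := walk_of_edist_le G huv
      exact reach_aux G Hg B hdec k p hp _ rfl _ _ hu hv0
    haveI : Nonempty {h | v ∈ ballSet G (B h) k} := ⟨⟨h0, hsub h0 hv0⟩⟩
    exact ⟨fun x y => (R x).trans (R y).symm⟩
  · rintro h ⟨⟨w0, u0, hu0, -⟩⟩
    obtain ⟨z, hz⟩ := hz h
    have hzu : ∀ u ∈ B h, G.edist u z ≤ (k : ℕ∞) := by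
      intro u hu
      rw [SimpleGraph.edist_comm]
      exact hz u hu
    refine ⟨⟨z, u0, hu0, hzu u0 hu0⟩, ?_⟩
    rintro ⟨w, hw⟩
    obtain ⟨u, hu, huw⟩ := id hw
    refine (SimpleGraph.edist_triangle (v := ⟨u, hsub h hu⟩)).trans ?_
    rw [two_mul, Nat.cast_add]
    refine add_le_add ?_ (ball_edist G _ k hu huw _ _ rfl rfl)
    rw [SimpleGraph.edist_comm]
    exact ball_edist G _ k hu (hzu u hu) _ _ rfl rfl


end RadialPaper
end

section
/- Let G be a graph and let H be a c-quasi-geodesic subgraph of G for some c ∈ ℕ. Given r ∈ ℕ, write B_h := B_G(h, r) for h ∈ V(H), and for each h ∈ V(H) set V_h := the union of B_{h'} over all h' ∈ B_H(h, cr + ⌈c/2⌉). Then (H,(V_h)_{h ∈ V(H)}) is an H-decomposition of the induced subgraph G' := G[⋃_{h ∈ V(H)} B_h] of radial width at most (c+1)r + ⌈c/2⌉. -/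
open SimpleGraph

namespace RadialPaper

variable {V W N : Type*}

theorem aux_walk {A : SimpleGraph V} {u v : V} {n : ℕ} (h : A.edist u v ≤ (n : ℕ∞)) :
    ∃ p : A.Walk u v, p.length ≤ n := by
  have hne : A.edist u v ≠ ⊤ := ne_top_of_le_ne_top (ENat.natCast_ne_top n) h
  obtain ⟨p, hp⟩ := exists_walk_of_edist_ne_top hne
  refine ⟨p, ?_⟩
  rw [← hp] at h
  exact_mod_cast h

theorem aux_split {A : SimpleGraph V} {u v : V} (p : A.Walk u v) {w : V} (hw : w ∈ p.support) :
    ∃ a b : ℕ, a + b = p.length ∧ A.edist u w ≤ (a : ℕ∞) ∧ A.edist w v ≤ (b : ℕ∞) := by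
  classical
  refine ⟨(p.takeUntil w hw).length, (p.dropUntil w hw).length, ?_, edist_le _, edist_le _⟩
  rw [← Walk.length_append, Walk.take_spec]

theorem aux_mid {A : SimpleGraph V} {u v : V} (p : A.Walk u v) :
    ∀ K L : ℕ, p.length ≤ K + L →
      ∃ m, A.edist u m ≤ (K : ℕ∞) ∧ A.edist m v ≤ (L : ℕ∞) := by
  induction p with
  | @nil u => intro K L _; exact ⟨u, by simp, by simp⟩
  | @cons u w v h q ih =>
    intro K L hl
    rw [Walk.length_cons] at hl
    rcases K with _ | K
    · refine ⟨u, by simp, (edist_le (Walk.cons h q)).trans ?_⟩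
      rw [Walk.length_cons]
      exact_mod_cast (by omega : q.length + 1 ≤ L)
    · obtain ⟨m, h1, h2⟩ := ih K L (by omega)
      refine ⟨m, ?_, h2⟩
      obtain ⟨p1, hp1⟩ := aux_walk h1
      refine (edist_le (Walk.cons h p1)).trans ?_
      rw [Walk.length_cons]
      exact_mod_cast (by omega : p1.length + 1 ≤ K + 1)

theorem aux_induce {A : SimpleGraph V} (S : Set V) (T : Set S) {u v : V} (p : A.Walk u v) :
    (∀ z ∈ p.support, ∃ hz : z ∈ S, (⟨z, hz⟩ : S) ∈ T) →
    ∀ (hu : u ∈ S) (hu' : (⟨u, hu⟩ : S) ∈ T) (hv : v ∈ S) (hv' : (⟨v, hv⟩ : S) ∈ T),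
      ∃ q : ((A.induce S).induce T).Walk ⟨⟨u, hu⟩, hu'⟩ ⟨⟨v, hv⟩, hv'⟩,
        q.length = p.length := by
  induction p with
  | nil => intro _ hu hu' hv hv'; exact ⟨Walk.nil, rfl⟩
  | @cons u w v h q ih =>
    intro H hu hu' hv hv'
    obtain ⟨hw, hw'⟩ := H w (by simp)
    obtain ⟨q', hq'⟩ := ih (fun z hz => H z (by simp [hz])) hw hw' hv hv'
    have hadj : ((A.induce S).induce T).Adj ⟨⟨u, hu⟩, hu'⟩ ⟨⟨w, hw⟩, hw'⟩ := h
    exact ⟨Walk.cons hadj q', congrArg (fun n => n + 1) hq'⟩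

theorem aux_close {G : SimpleGraph V} {Hs : G.Subgraph} {c : ℕ}
    (hgeo : IsQuasiGeodesic G Hs c) (a b : Hs.verts) (n : ℕ)
    (h : G.edist (a : V) (b : V) ≤ (n : ℕ∞)) : ∃ p : Hs.coe.Walk a b, p.length ≤ c * n := by
  apply aux_walk
  refine (hgeo a b).trans ?_
  push_cast
  gcongr

theorem aux_tri {A : SimpleGraph V} {u v w : V} {a b : ℕ}
    (h1 : A.edist u v ≤ (a : ℕ∞)) (h2 : A.edist v w ≤ (b : ℕ∞)) :
    A.edist u w ≤ ((a + b : ℕ) : ℕ∞) := by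
  push_cast
  exact SimpleGraph.edist_triangle.trans (add_le_add h1 h2)

theorem aux_mono {A : SimpleGraph V} {u v : V} {a b : ℕ}
    (h1 : A.edist u v ≤ (a : ℕ∞)) (h : a ≤ b) : A.edist u v ≤ (b : ℕ∞) :=
  h1.trans (by exact_mod_cast h)

theorem aux_symm {A : SimpleGraph V} {u v : V} {a : ℕ}
    (h1 : A.edist u v ≤ (a : ℕ∞)) : A.edist v u ≤ (a : ℕ∞) := by
  rwa [SimpleGraph.edist_comm]

/-- Let `Hs` be a `c`-quasi-geodesic subgraph of `G` and `r : ℕ`.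
With `S` the union of the balls `B_G(h, r)` over `h ∈ V(Hs)`, and `V_h` the union of the
balls `B_G(h', r)` over all `h'` in the ball `B_{Hs}(h, c·r + ⌈c/2⌉)`, the family `(V_h)`
is an `Hs`-decomposition of `G[S]` of radial width at most `(c+1)·r + ⌈c/2⌉`. -/
theorem partial_decomposition_along_quasi_geodesic_subgraph
    {V : Type*} [Fintype V] (G : SimpleGraph V) (Hs : G.Subgraph) (c r : ℕ)
    (hgeo : IsQuasiGeodesic G Hs c)
    (S : Set V) (hS : S = {x : V | ∃ h ∈ Hs.verts, G.edist h x ≤ (r : ℕ∞)})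
    (B : Hs.verts → Set S)
    (hB : B = fun h => {x : S | ∃ h' : Hs.verts,
      Hs.coe.edist h h' ≤ ((c * r + (c + 1) / 2 : ℕ) : ℕ∞) ∧
      G.edist (h' : V) (x : V) ≤ (r : ℕ∞)}) :
    IsGraphDecomp (G.induce S) Hs.coe B ∧
      ∀ h, radiusLE ((G.induce S).induce (B h)) ((c + 1) * r + (c + 1) / 2) := by
  set K : ℕ := c * r + (c + 1) / 2 with hK
  have hmem : ∀ h (x : S), x ∈ B h ↔ ∃ h' : Hs.verts,
      Hs.coe.edist h h' ≤ (K : ℕ∞) ∧ G.edist (h' : V) (x : V) ≤ (r : ℕ∞) := by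
    intro h x; rw [hB]; rfl
  have hSm : ∀ x : V, x ∈ S ↔ ∃ h : Hs.verts, G.edist (h : V) x ≤ (r : ℕ∞) := by
    intro x; rw [hS]; simp
  clear_value K
  clear hS hB
  refine ⟨⟨?_, ?_, ?_⟩, ?_⟩
  · rintro ⟨x, hx⟩
    obtain ⟨h, hh⟩ := (hSm x).1 hx
    exact ⟨h, (hmem _ _).2 ⟨h, by simp, hh⟩⟩
  · rintro ⟨x, hx⟩ ⟨y, hy⟩ hxy
    have hxy' : G.Adj x y := hxy
    obtain ⟨a, ha⟩ := (hSm x).1 hx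
    obtain ⟨b, hb⟩ := (hSm y).1 hy
    have h1 : G.edist x y ≤ ((1 : ℕ) : ℕ∞) := by
      rw [edist_eq_one_iff_adj.2 hxy']; rfl
    obtain ⟨p, hp⟩ := aux_close hgeo a b _ (aux_tri (aux_tri ha h1) (aux_symm hb))
    have hle : p.length ≤ K + K := by
      have : c * (r + 1 + r) = 2 * (c * r) + c := by ring
      omega
    obtain ⟨m, hm1, hm2⟩ := aux_mid p K K hle
    exact ⟨m, (hmem _ _).2 ⟨a, aux_symm hm1, ha⟩, (hmem _ _).2 ⟨b, hm2, hb⟩⟩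
  · rintro ⟨x, hx⟩
    obtain ⟨a, ha⟩ := (hSm x).1 hx
    have ha' : (⟨x, hx⟩ : S) ∈ B a := (hmem _ _).2 ⟨a, by simp, ha⟩
    refine (connected_iff_exists_forall_reachable _).2 ⟨⟨a, ha'⟩, ?_⟩
    rintro ⟨h, hh⟩
    obtain ⟨b, hb, hbx⟩ := (hmem _ _).1 hh
    have hb' : (⟨x, hx⟩ : S) ∈ B b := (hmem _ _).2 ⟨b, by simp, hbx⟩
    obtain ⟨p, hp⟩ := aux_close hgeo a b _ (aux_tri ha (aux_symm hbx))
    obtain ⟨q, hq⟩ := aux_walk (aux_symm hb)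
    have hpm : ∀ z ∈ p.support, z ∈ {h | (⟨x, hx⟩ : S) ∈ B h} := by
      intro z hz
      obtain ⟨i, j, hij, hi, hj⟩ := aux_split p hz
      have : c * (r + r) = 2 * (c * r) := by ring
      by_cases hc : i ≤ c * r
      · exact (hmem _ _).2 ⟨a, aux_mono (aux_symm hi) (by omega), ha⟩
      · exact (hmem _ _).2 ⟨b, aux_mono hj (by omega), hbx⟩
    have hqm : ∀ z ∈ q.support, z ∈ {h | (⟨x, hx⟩ : S) ∈ B h} := by
      intro z hz
      obtain ⟨i, j, hij, hi, hj⟩ := aux_split q hz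
      exact (hmem _ _).2 ⟨b, aux_mono (aux_symm hi) (by omega), hbx⟩
    exact (p.induce _ hpm).reachable.trans (q.induce _ hqm).reachable
  · intro h _
    have hball : ∀ h' : Hs.verts, Hs.coe.edist h h' ≤ (K : ℕ∞) → ∀ z : V,
        G.edist (h' : V) z ≤ (r : ℕ∞) → ∃ hz : z ∈ S, (⟨z, hz⟩ : S) ∈ B h :=
      fun h' hh' z hz => ⟨(hSm z).2 ⟨h', hz⟩, (hmem _ _).2 ⟨h', hh', hz⟩⟩
    obtain ⟨hh1, hh2⟩ := hball h (by simp) h (by simp)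
    refine ⟨⟨⟨h, hh1⟩, hh2⟩, ?_⟩
    rintro ⟨⟨x, hx⟩, hx'⟩
    obtain ⟨h', hh', hx2⟩ := (hmem _ _).1 hx'
    obtain ⟨p, hp⟩ := aux_walk hh'
    obtain ⟨q, hq⟩ := aux_walk hx2
    obtain ⟨w, hw⟩ := aux_induce S (B h) ((p.map Hs.hom).append q) (by
      intro z hz
      rcases (Walk.mem_support_append_iff _ _).1 hz with hz | hz
      · rw [Walk.support_map, List.mem_map] at hz
        obtain ⟨y, hy, rfl⟩ := hz
        obtain ⟨i, j, hij, hi, hj⟩ := aux_split p hy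
        exact hball y (aux_mono hi (by omega)) _ (by simp)
      · obtain ⟨i, j, hij, hi, hj⟩ := aux_split q hz
        exact hball h' hh' z (aux_mono hi (by omega))) hh1 hh2 hx hx'
    refine aux_mono (edist_le w) ?_
    have h3 : ((p.map Hs.hom).append q).length = p.length + q.length :=
      (Walk.length_append _ _).trans (congrArg (fun n => n + q.length) (Walk.length_map _ _))
    have : (c + 1) * r = c * r + r := by ring
    rw [hw]
    omega

end RadialPaper
end
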